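/- Let Ξ be a measurable space, P̂ a probability measure on Ξ, and 𝒫 a nonempty set of probability measures on Ξ. For θ ∈ [0,1] define the TRO ambiguity set 𝒫'_θ := {(1−θ)·P̂ + θ·Q : Q ∈ 𝒫}. Then the family {𝒫'_θ : θ ∈ [0,1]} is strictly increasing, i.e. 𝒫'_{θ₁} ⊊ 𝒫'_{θ₂} (proper inclusion) whenever 0 ≤ θ₁ < θ₂ ≤ 1, if and only if 𝒫 is star-shaped with star center P̂ and 𝒫 ≠ {P̂}. -/

import Mathlib

open MeasureTheory

/-- The mixture `(1-θ)·P + θ·Q` of two measures. -/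
noncomputable def mix {Ξ : Type*} [MeasurableSpace Ξ] (θ : ℝ) (P Q : Measure Ξ) : Measure Ξ :=
  ENNReal.ofReal (1 - θ) • P + ENNReal.ofReal θ • Q

/-- The TRO ambiguity set `𝒜'_θ = {(1-θ)·P̂ + θ·Q : Q ∈ 𝒜}`. -/
def TROset {Ξ : Type*} [MeasurableSpace Ξ] (Phat : Measure Ξ) (𝒜 : Set (Measure Ξ)) (θ : ℝ) :
    Set (Measure Ξ) := {P | ∃ Q ∈ 𝒜, P = mix θ Phat Q}

theorem mix_real {Ξ : Type*} [MeasurableSpace Ξ] {θ : ℝ} (h0 : 0 ≤ θ) (h1 : θ ≤ 1)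
    (P Q : Measure Ξ) [IsFiniteMeasure P] [IsFiniteMeasure Q] (A : Set Ξ) :
    (mix θ P Q A).toReal = (1 - θ) * (P A).toReal + θ * (Q A).toReal := by
  unfold mix
  rw [Measure.add_apply, Measure.smul_apply, Measure.smul_apply, smul_eq_mul, smul_eq_mul,
    ENNReal.toReal_add (ENNReal.mul_ne_top ENNReal.ofReal_ne_top (measure_ne_top _ _))
      (ENNReal.mul_ne_top ENNReal.ofReal_ne_top (measure_ne_top _ _)),
    ENNReal.toReal_mul, ENNReal.toReal_mul, ENNReal.toReal_ofReal (by linarith),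
    ENNReal.toReal_ofReal h0]

theorem mix_finite {Ξ : Type*} [MeasurableSpace Ξ] (θ : ℝ)
    (P Q : Measure Ξ) [IsFiniteMeasure P] [IsFiniteMeasure Q] : IsFiniteMeasure (mix θ P Q) := by
  constructor
  unfold mix
  rw [Measure.add_apply, Measure.smul_apply, Measure.smul_apply, smul_eq_mul, smul_eq_mul]
  exact ENNReal.add_lt_top.2 ⟨ENNReal.mul_lt_top ENNReal.ofReal_lt_top (measure_lt_top _ _),
    ENNReal.mul_lt_top ENNReal.ofReal_lt_top (measure_lt_top _ _)⟩

theorem ext_real {Ξ : Type*} [MeasurableSpace Ξ]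
    (P Q : Measure Ξ) [IsFiniteMeasure P] [IsFiniteMeasure Q]
    (h : ∀ A, (P A).toReal = (Q A).toReal) : P = Q :=
  Measure.ext fun A _ =>
    (ENNReal.toReal_eq_toReal_iff' (measure_ne_top _ _) (measure_ne_top _ _)).1 (h A)

theorem mix_zero {Ξ : Type*} [MeasurableSpace Ξ] (P Q : Measure Ξ) : mix 0 P Q = P := by
  simp [mix]

theorem mix_one {Ξ : Type*} [MeasurableSpace Ξ] (P Q : Measure Ξ) : mix 1 P Q = Q := by
  simp [mix]

/-- The family `{𝒜'_θ : θ ∈ [0,1]}` is strictly increasing iff `𝒜` is star-shaped with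
star center `P̂` and `𝒜 ≠ {P̂}`. -/
theorem tro_strict_hierarchical_iff_starShaped_and_ne
    {Ξ : Type*} [MeasurableSpace Ξ] (Phat : Measure Ξ) [IsProbabilityMeasure Phat]
    (𝒜 : Set (Measure Ξ)) (h𝒜ne : 𝒜.Nonempty)
    (h𝒜prob : ∀ Q ∈ 𝒜, IsProbabilityMeasure Q) :
    (∀ θ₁ θ₂ : ℝ, 0 ≤ θ₁ → θ₁ < θ₂ → θ₂ ≤ 1 →
        TROset Phat 𝒜 θ₁ ⊂ TROset Phat 𝒜 θ₂) ↔
      ((Phat ∈ 𝒜 ∧ ∀ α ∈ Set.Icc (0:ℝ) 1, ∀ P ∈ 𝒜, mix α Phat P ∈ 𝒜) ∧ 𝒜 ≠ {Phat}) := by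
  have hone : TROset Phat 𝒜 1 = 𝒜 := by
    ext P
    simp [TROset, mix_one]
  have hzero : TROset Phat 𝒜 0 = {Phat} := by
    ext P
    obtain ⟨Q, hQ⟩ := h𝒜ne
    simp only [TROset, mix_zero, Set.mem_setOf_eq, Set.mem_singleton_iff]
    exact ⟨fun ⟨_, _, h⟩ => h, fun h => ⟨Q, hQ, h⟩⟩
  constructor
  · intro H
    have h01 := H 0 1 le_rfl one_pos le_rfl
    rw [hone, hzero] at h01
    refine ⟨⟨h01.1 rfl, ?_⟩, h01.ne'⟩
    rintro α ⟨ha0, ha1⟩ P hP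
    rcases ha1.lt_or_eq with ha | rfl
    · have := H α 1 ha0 ha le_rfl
      rw [hone] at this
      exact this.1 ⟨P, hP, rfl⟩
    · rwa [mix_one]
  · rintro ⟨⟨hPA, hstar⟩, hne⟩ θ₁ θ₂ h0 h12 h2
    have hpos : 0 < θ₂ := h0.trans_lt h12
    refine ⟨?_, ?_⟩
    · rintro _ ⟨Q, hQ, rfl⟩
      have := h𝒜prob Q hQ
      have hr0 : 0 ≤ θ₁ / θ₂ := by positivity
      have hr1 : θ₁ / θ₂ ≤ 1 := (div_le_one hpos).2 h12.le
      refine ⟨mix (θ₁ / θ₂) Phat Q, hstar _ ⟨hr0, hr1⟩ Q hQ, ?_⟩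
      have := mix_finite (θ₁ / θ₂) Phat Q
      have := mix_finite θ₁ Phat Q
      have := mix_finite θ₂ Phat (mix (θ₁ / θ₂) Phat Q)
      apply ext_real
      intro A
      rw [mix_real h0 (by linarith), mix_real hpos.le h2, mix_real hr0 hr1]
      field_simp
      ring
    · intro hsub
      apply hne
      refine Set.eq_singleton_iff_unique_mem.2 ⟨hPA, fun Q₀ hQ₀ => ?_⟩
      have := h𝒜prob Q₀ hQ₀
      apply ext_real
      intro A
      have key : ∀ n : ℕ, ∃ Q ∈ 𝒜, θ₁ ^ n * ((Q A).toReal - (Phat A).toReal)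
          = θ₂ ^ n * ((Q₀ A).toReal - (Phat A).toReal) := by
        intro n
        induction n with
        | zero => exact ⟨Q₀, hQ₀, by simp⟩
        | succ n ih =>
          obtain ⟨Q, hQ, hq⟩ := ih
          obtain ⟨Q', hQ', h⟩ := hsub ⟨Q, hQ, rfl⟩
          have := h𝒜prob Q hQ
          have := h𝒜prob Q' hQ'
          have h := congrArg (fun M : Measure Ξ => (M A).toReal) h
          simp only [mix_real hpos.le h2, mix_real h0 (h12.le.trans h2)] at h
          refine ⟨Q', hQ', ?_⟩
          rw [pow_succ, pow_succ]
          linear_combination θ₂ * hq - θ₁ ^ n * h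
      have bd : ∀ n : ℕ, |(Q₀ A).toReal - (Phat A).toReal| ≤ (θ₁ / θ₂) ^ n := by
        intro n
        obtain ⟨Q, hQ, hq⟩ := key n
        have := h𝒜prob Q hQ
        have b1 : (Q A).toReal ≤ 1 := measureReal_le_one
        have b2 : (Phat A).toReal ≤ 1 := measureReal_le_one
        have b3 : 0 ≤ (Q A).toReal := ENNReal.toReal_nonneg
        have b4 : 0 ≤ (Phat A).toReal := ENNReal.toReal_nonneg
        have b : |(Q A).toReal - (Phat A).toReal| ≤ 1 := abs_le.2 ⟨by linarith, by linarith⟩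
        have hq := congrArg abs hq
        rw [abs_mul, abs_mul, abs_of_nonneg (pow_nonneg h0 n),
          abs_of_nonneg (pow_nonneg hpos.le n)] at hq
        rw [div_pow, le_div_iff₀ (pow_pos hpos n), mul_comm, ← hq]
        exact mul_le_of_le_one_right (pow_nonneg h0 n) b
      have lim := tendsto_pow_atTop_nhds_zero_of_lt_one (r := θ₁ / θ₂) (by positivity)
        ((div_lt_one hpos).2 h12)
      have := ge_of_tendsto' lim bd
      exact sub_eq_zero.1 (abs_eq_zero.1 (le_antisymm this (abs_nonneg _)))
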